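/- For every integer n ≥ 2, the number of ordered pairs (f, f′), where f: 𝒞 → ℕ and f′: ℕ × 𝒞 → ℕ are finitely supported functions all of whose values are triangular numbers and which satisfy Σ_{𝔠} 2^{|𝔠|} · f(𝔠) + Σ_{(a,𝔠)} 2^{a+|𝔠|} · f′(a,𝔠) = n, is strictly smaller than the number of bipartitions of n. (This is the combinatorial content of the result that for the compact Lie group Sp(n) at the bad prime ℓ = 2, the number of weights of its 2-fusion system is strictly less than |Irr(W(C_n))|.) -/

import Mathlib

/-- A natural number is triangular if it is of the form `k * (k + 1) / 2`. -/
def IsTriangular (m : ℕ) : Prop := ∃ k : ℕ, m = k * (k + 1) / 2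

/-- The sum `|𝔠| = c₁ + ⋯ + c_t` of a finite sequence `𝔠` of strictly positive integers. -/
def csum (c : List ℕ+) : ℕ := (c.map fun x => (x : ℕ)).sum


/-- Weight of a partition given by its multiplicities (`m i` is the multiplicity of `i + 1`). -/
noncomputable def pw (m : ℕ →₀ ℕ) : ℕ := m.sum fun i c => (i + 1) * c

lemma pw_le_zero {m : ℕ →₀ ℕ} {N : ℕ} (h : pw m ≤ N) : ∀ i, N ≤ i → m i = 0 := by
  intro i hi
  by_contra hne
  have h1 : (i + 1) * m i ≤ pw m := by
    unfold pw Finsupp.sum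
    exact Finset.single_le_sum (f := fun i => (i + 1) * m i) (fun _ _ => Nat.zero_le _)
      (Finsupp.mem_support_iff.2 hne)
  have : 1 ≤ m i := Nat.one_le_iff_ne_zero.2 hne
  nlinarith

lemma pw_eq_range {m : ℕ →₀ ℕ} {N : ℕ} (h : ∀ i, N ≤ i → m i = 0) :
    pw m = ∑ i ∈ Finset.range N, (i + 1) * m i := by
  unfold pw
  refine Finsupp.sum_of_support_subset _ ?_ _ (by simp)
  intro i hi
  by_contra hne
  exact (Finsupp.mem_support_iff.1 hi) (h i (by simpa using hne))

/-- The beta-set with `N` elements attached to multiplicities `m 0, …, m (N-1)`. -/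
def betaSet (m : ℕ → ℕ) : ℕ → Finset ℕ
  | 0 => ∅
  | N + 1 => insert (m N) ((betaSet m N).image (fun x => x + (m N + 1)))

lemma betaSet_notMem (m : ℕ → ℕ) (N : ℕ) :
    m N ∉ (betaSet m N).image (fun x => x + (m N + 1)) := by
  simp only [Finset.mem_image, not_exists, not_and]
  intro x _ h
  omega

lemma betaSet_card (m : ℕ → ℕ) (N : ℕ) : (betaSet m N).card = N := by
  induction N with
  | zero => rfl
  | succ N ih =>
    rw [betaSet, Finset.card_insert_of_notMem (betaSet_notMem m N),
      Finset.card_image_of_injective _ (add_left_injective _), ih]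

lemma betaSet_sum (m : ℕ → ℕ) (N : ℕ) :
    2 * ∑ x ∈ betaSet m N, x + N = 2 * ∑ i ∈ Finset.range N, (i + 1) * m i + N * N := by
  induction N with
  | zero => rfl
  | succ N ih =>
    rw [betaSet, Finset.sum_insert (betaSet_notMem m N),
      Finset.sum_image (fun a _ b _ h => add_left_injective _ h), Finset.sum_add_distrib,
      Finset.sum_const, betaSet_card, Finset.sum_range_succ, smul_eq_mul]
    nlinarith

lemma insert_shift_inj {a b : ℕ} {S T : Finset ℕ}
    (h : insert a (S.image (fun x => x + (a + 1))) = insert b (T.image (fun x => x + (b + 1)))) :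
    a = b ∧ S = T := by
  have hab : a = b := by
    have h1 : a ∈ insert b (T.image (fun x => x + (b + 1))) := h ▸ Finset.mem_insert_self _ _
    have h2 : b ∈ insert a (S.image (fun x => x + (a + 1))) := h ▸ Finset.mem_insert_self _ _
    simp only [Finset.mem_insert, Finset.mem_image] at h1 h2
    rcases h1 with h1 | ⟨x, _, hx⟩
    · exact h1
    · rcases h2 with h2 | ⟨y, _, hy⟩
      · exact h2.symm
      · omega
  subst hab
  refine ⟨rfl, ?_⟩
  ext x
  have := Finset.ext_iff.1 h (x + (a + 1))
  have hne : x + (a + 1) ≠ a := by omega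
  simpa [hne] using this

lemma betaSet_inj {m m' : ℕ → ℕ} {N : ℕ} (h : betaSet m N = betaSet m' N) :
    ∀ i < N, m i = m' i := by
  induction N with
  | zero => simp
  | succ N ih =>
    obtain ⟨h1, h2⟩ := insert_shift_inj h
    intro i hi
    rcases Nat.lt_succ_iff_lt_or_eq.1 hi with h3 | rfl
    · exact ih h2 i h3
    · exact h1

lemma betaSet_congr {m m' : ℕ → ℕ} {N : ℕ} (h : ∀ i < N, m i = m' i) :
    betaSet m N = betaSet m' N := by
  induction N with
  | zero => rfl
  | succ N ih =>
    rw [betaSet, betaSet, h N (Nat.lt_succ_self N), ih (fun i hi => h i (by omega))]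

lemma betaSet_surj (N : ℕ) : ∀ X : Finset ℕ, X.card = N →
    ∃ m : ℕ →₀ ℕ, betaSet m N = X ∧ ∀ i, N ≤ i → m i = 0 := by
  induction N with
  | zero =>
    intro X hX
    exact ⟨0, (Finset.card_eq_zero.1 hX).symm, by simp⟩
  | succ N ih =>
    intro X hX
    have hne : X.Nonempty := Finset.card_pos.1 (by omega)
    set a := X.min' hne with ha
    have haX : a ∈ X := Finset.min'_mem _ _
    have hlt : ∀ x ∈ X.erase a, a < x := fun x hx =>
      lt_of_le_of_ne (Finset.min'_le _ _ (Finset.mem_of_mem_erase hx))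
        (Finset.ne_of_mem_erase hx).symm
    set Y := (X.erase a).image (fun x => x - (a + 1)) with hY
    have hYc : Y.card = N := by
      rw [hY, Finset.card_image_of_injOn, Finset.card_erase_of_mem haX, hX]
      · rfl
      · intro x hx y hy hxy
        have h1 := hlt x hx
        have h2 := hlt y hy
        simp only at hxy
        omega
    obtain ⟨m, hm, hm0⟩ := ih Y hYc
    refine ⟨m.update N a, ?_, ?_⟩
    · have h1 : betaSet (m.update N a) N = Y := by
        rw [← hm]
        apply betaSet_congr
        intro i hi
        simp [Finsupp.update, Function.update, hi.ne]
      have h2 : (m.update N a) N = a := by simp [Finsupp.update, Function.update]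
      rw [betaSet, h1, h2]
      have h3 : Y.image (fun x => x + (a + 1)) = X.erase a := by
        rw [hY, Finset.image_image]
        conv_rhs => rw [← Finset.image_id (s := X.erase a)]
        apply Finset.image_congr
        intro x hx
        have := hlt x hx
        simp only [Function.comp, id]
        omega
      rw [h3, Finset.insert_erase haX]
    · intro i hi
      have : i ≠ N := by omega
      simp [Finsupp.update, Function.update, this, hm0 i (by omega)]

/-- Interleaving of two sets of naturals as evens and odds. -/
def weave (Y Z : Finset ℕ) : Finset ℕ :=
  Y.image (fun x => 2 * x) ∪ Z.image (fun x => 2 * x + 1)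

lemma weave_disj (Y Z : Finset ℕ) :
    Disjoint (Y.image (fun x => 2 * x)) (Z.image (fun x => 2 * x + 1)) := by
  rw [Finset.disjoint_left]
  simp only [Finset.mem_image, not_exists, not_and]
  rintro _ ⟨x, _, rfl⟩ y _ h
  omega

lemma weave_card (Y Z : Finset ℕ) : (weave Y Z).card = Y.card + Z.card := by
  rw [weave, Finset.card_union_of_disjoint (weave_disj Y Z),
    Finset.card_image_of_injective _ (fun a b h => by simpa using h),
    Finset.card_image_of_injective _ (fun a b h => by simpa using h)]

lemma weave_sum (Y Z : Finset ℕ) :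
    ∑ x ∈ weave Y Z, x = 2 * ∑ x ∈ Y, x + 2 * ∑ x ∈ Z, x + Z.card := by
  rw [weave, Finset.sum_union (weave_disj Y Z),
    Finset.sum_image (fun a _ b _ h => by simpa using h),
    Finset.sum_image (fun a _ b _ h => by simpa using h), Finset.sum_add_distrib,
    ← Finset.mul_sum, ← Finset.mul_sum]
  simp
  ring

lemma weave_inj {Y Z Y' Z' : Finset ℕ} (h : weave Y Z = weave Y' Z') : Y = Y' ∧ Z = Z' := by
  constructor
  · ext x
    have := Finset.ext_iff.1 h (2 * x)
    simp only [weave, Finset.mem_union, Finset.mem_image] at this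
    constructor
    · intro hx
      rcases this.1 (Or.inl ⟨x, hx, rfl⟩) with ⟨y, hy, e⟩ | ⟨y, hy, e⟩
      · obtain rfl : y = x := by omega
        exact hy
      · omega
    · intro hx
      rcases this.2 (Or.inl ⟨x, hx, rfl⟩) with ⟨y, hy, e⟩ | ⟨y, hy, e⟩
      · obtain rfl : y = x := by omega
        exact hy
      · omega
  · ext x
    have := Finset.ext_iff.1 h (2 * x + 1)
    simp only [weave, Finset.mem_union, Finset.mem_image] at this
    constructor
    · intro hx
      rcases this.1 (Or.inr ⟨x, hx, rfl⟩) with ⟨y, hy, e⟩ | ⟨y, hy, e⟩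
      · omega
      · obtain rfl : y = x := by omega
        exact hy
    · intro hx
      rcases this.2 (Or.inr ⟨x, hx, rfl⟩) with ⟨y, hy, e⟩ | ⟨y, hy, e⟩
      · omega
      · obtain rfl : y = x := by omega
        exact hy

/-- Every triangular number has a (signed) pair of runner sizes. -/
lemma tri_runner {t n : ℕ} (ht : IsTriangular t) (htn : t ≤ n) :
    ∃ A B : ℕ, A + B = 4 * n ∧ n ≤ A ∧ n ≤ B ∧ A * A + B * B + 2 * n = t + 8 * n * n + A := by
  obtain ⟨k, rfl⟩ := ht
  rcases Nat.even_or_odd' k with ⟨j, rfl | rfl⟩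
  · have e : 2 * j * (2 * j + 1) / 2 = j * (2 * j + 1) := by
      rw [mul_assoc, Nat.mul_div_cancel_left _ (by norm_num)]
    rw [e] at htn ⊢
    have hj : j ≤ n := by nlinarith
    refine ⟨2 * n - j, 2 * n + j, by omega, by omega, by omega, ?_⟩
    obtain ⟨a, ha⟩ : ∃ a, 2 * n = a + j := ⟨2 * n - j, by omega⟩
    have : 2 * n - j = a := by omega
    rw [this]
    nlinarith
  · have e : (2 * j + 1) * (2 * j + 1 + 1) / 2 = (2 * j + 1) * (j + 1) := by
      rw [show (2 * j + 1) * (2 * j + 1 + 1) = 2 * ((2 * j + 1) * (j + 1)) by ring,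
        Nat.mul_div_cancel_left _ (by norm_num)]
    rw [e] at htn ⊢
    have hj : j + 1 ≤ n := by nlinarith
    refine ⟨2 * n + (j + 1), 2 * n - (j + 1), by omega, by omega, by omega, ?_⟩
    obtain ⟨a, ha⟩ : ∃ a, 2 * n = a + (j + 1) := ⟨2 * n - (j + 1), by omega⟩
    have : 2 * n - (j + 1) = a := by omega
    rw [this]
    nlinarith

lemma core (n : ℕ) : ∃ Φ : ℕ → (ℕ →₀ ℕ) → (ℕ →₀ ℕ) → (ℕ →₀ ℕ),
    (∀ t l m, IsTriangular t → t + 2 * pw l + 2 * pw m ≤ n →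
      pw (Φ t l m) = t + 2 * pw l + 2 * pw m) ∧
    (∀ t l m t' l' m', IsTriangular t → t + 2 * pw l + 2 * pw m ≤ n →
      IsTriangular t' → t' + 2 * pw l' + 2 * pw m' ≤ n →
      Φ t l m = Φ t' l' m' → t = t' ∧ l = l' ∧ m = m') := by
  have key : ∀ t l m, ∃ ν : ℕ →₀ ℕ, IsTriangular t → t + 2 * pw l + 2 * pw m ≤ n →
      ∃ A B : ℕ, A + B = 4 * n ∧ n ≤ A ∧ n ≤ B ∧
        A * A + B * B + 2 * n = t + 8 * n * n + A ∧
        betaSet ν (4 * n) = weave (betaSet l A) (betaSet m B) ∧ ∀ i, 4 * n ≤ i → ν i = 0 := by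
    intro t l m
    by_cases h : IsTriangular t ∧ t + 2 * pw l + 2 * pw m ≤ n
    · obtain ⟨A, B, h1, h2, h3, h4⟩ := tri_runner h.1 (show t ≤ n by omega)
      obtain ⟨ν, hν, hν0⟩ := betaSet_surj (4 * n) (weave (betaSet l A) (betaSet m B))
        (by rw [weave_card, betaSet_card, betaSet_card, h1])
      exact ⟨ν, fun _ _ => ⟨A, B, h1, h2, h3, h4, hν, hν0⟩⟩
    · exact ⟨0, fun a b => absurd ⟨a, b⟩ h⟩
  choose Φ hΦ using key
  refine ⟨Φ, ?_, ?_⟩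
  · intro t l m ht hn
    obtain ⟨A, B, h1, h2, h3, h4, h5, h6⟩ := hΦ t l m ht hn
    have e0 := betaSet_sum (Φ t l m) (4 * n)
    have e1 := betaSet_sum l A
    have e2 := betaSet_sum m B
    rw [h5, weave_sum, betaSet_card, ← pw_eq_range h6] at e0
    rw [← pw_eq_range (fun i hi => pw_le_zero (show pw l ≤ n by omega) i (by omega))] at e1
    rw [← pw_eq_range (fun i hi => pw_le_zero (show pw m ≤ n by omega) i (by omega))] at e2
    nlinarith
  · intro t l m t' l' m' ht hn ht' hn' he
    obtain ⟨A, B, h1, h2, h3, h4, h5, h6⟩ := hΦ t l m ht hn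
    obtain ⟨A', B', h1', h2', h3', h4', h5', h6'⟩ := hΦ t' l' m' ht' hn'
    rw [he, h5'] at h5
    obtain ⟨hl, hm⟩ := weave_inj h5
    have hA : A' = A := by simpa [betaSet_card] using congrArg Finset.card hl
    have hB : B' = B := by simpa [betaSet_card] using congrArg Finset.card hm
    subst hA hB
    refine ⟨by omega, ?_, ?_⟩
    · ext i
      by_cases hi : i < A'
      · exact (betaSet_inj hl i hi).symm
      · rw [pw_le_zero (show pw l ≤ n by omega) i (by omega),
          pw_le_zero (show pw l' ≤ n by omega) i (by omega)]
    · ext i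
      by_cases hi : i < B'
      · exact (betaSet_inj hm i hi).symm
      · rw [pw_le_zero (show pw m ≤ n by omega) i (by omega),
          pw_le_zero (show pw m' ≤ n by omega) i (by omega)]

/-- Left child in the binary tree `ℕ × List ℕ+`. -/
def lch (i : ℕ × List ℕ+) : ℕ × List ℕ+ := (i.1 + 1, i.2)

/-- Right child in the binary tree `ℕ × List ℕ+`. -/
def rch (i : ℕ × List ℕ+) : ℕ × List ℕ+ := (0, i.1.succPNat :: i.2)

/-- Level in the binary tree. -/
def lev (i : ℕ × List ℕ+) : ℕ := i.1 + csum i.2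

lemma lev_lch (i) : lev (lch i) = lev i + 1 := by simp [lev, lch]; omega
lemma lev_rch (i) : lev (rch i) = lev i + 1 := by simp [lev, rch, csum]; omega

lemma lch_inj : Function.Injective lch := by
  rintro ⟨a, c⟩ ⟨b, d⟩ h
  simpa [lch] using h

lemma rch_inj : Function.Injective rch := by
  rintro ⟨a, c⟩ ⟨b, d⟩ h
  simpa [rch] using h

lemma tree_cases (i : ℕ × List ℕ+) : i = (0, []) ∨ (∃ j, lch j = i) ∨ ∃ j, rch j = i := by
  obtain ⟨a, c⟩ := i
  rcases a with _ | a
  · rcases c with _ | ⟨x, c⟩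
    · exact Or.inl rfl
    · refine Or.inr (Or.inr ⟨(x.natPred, c), ?_⟩)
      simp [rch]
  · exact Or.inr (Or.inl ⟨(a, c), rfl⟩)

/-- Total weight of a function on the tree. -/
noncomputable def tw (g : ℕ × List ℕ+ → ℕ) : ℕ := ∑ᶠ i : ℕ × List ℕ+, 2 ^ lev i * g i

lemma tw_rec {g : ℕ × List ℕ+ → ℕ} (hg : (Function.support g).Finite) :
    tw g = g (0, []) + 2 * tw (g ∘ lch) + 2 * tw (g ∘ rch) := by
  set F : ℕ × List ℕ+ → ℕ := fun i => 2 ^ lev i * g i with hF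
  have hFs : (Function.support F).Finite := hg.subset (fun i hi => by
    simp only [hF, Function.mem_support] at hi ⊢
    intro h
    exact hi (by simp [h]))
  have hL : (Function.support (fun i => 2 ^ lev i * g (lch i))).Finite :=
    (hg.preimage (lch_inj.injOn)).subset (fun i hi => by
      simp only [Function.mem_support, Set.mem_preimage] at hi ⊢
      intro h
      exact hi (by simp [h]))
  have hR : (Function.support (fun i => 2 ^ lev i * g (rch i))).Finite :=
    (hg.preimage (rch_inj.injOn)).subset (fun i hi => by
      simp only [Function.mem_support, Set.mem_preimage] at hi ⊢
      intro h
      exact hi (by simp [h]))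
  have h1 : tw g = ∑ᶠ i ∈ ({(0, [])} ∪ (Set.range lch ∪ Set.range rch) : Set (ℕ × List ℕ+)),
      F i := by
    have hu : ({(0, [])} ∪ (Set.range lch ∪ Set.range rch) : Set (ℕ × List ℕ+)) = Set.univ := by
      ext i
      simpa using tree_cases i
    rw [hu, finsum_mem_univ]
    rfl
  rw [h1, finsum_mem_union' ?_ (hFs.subset Set.inter_subset_right)
    (hFs.subset Set.inter_subset_right), finsum_mem_union' ?_ (hFs.subset Set.inter_subset_right)
    (hFs.subset Set.inter_subset_right), finsum_mem_singleton, finsum_mem_range lch_inj,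
    finsum_mem_range rch_inj]
  · have e1 : ∑ᶠ j, F (lch j) = 2 * tw (g ∘ lch) := by
      unfold tw
      simp only [Function.comp]
      rw [mul_finsum' _ _ hL]
      apply finsum_congr
      intro i
      simp only [hF, lev_lch, pow_succ]
      ring
    have e2 : ∑ᶠ j, F (rch j) = 2 * tw (g ∘ rch) := by
      unfold tw
      simp only [Function.comp]
      rw [mul_finsum' _ _ hR]
      apply finsum_congr
      intro i
      simp only [hF, lev_rch, pow_succ]
      ring
    rw [e1, e2]
    simp [hF, lev, csum]
    ring
  · rw [Set.disjoint_left]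
    rintro _ ⟨a, rfl⟩ ⟨b, hb⟩
    simp [lch, rch] at hb
  · rw [Set.disjoint_left]
    rintro _ rfl (⟨a, ha⟩ | ⟨a, ha⟩)
    · simp [lch] at ha
    · simp [rch] at ha

/-- Iterated assembly of a partition from a function on the tree. -/
def asm (Φ : ℕ → (ℕ →₀ ℕ) → (ℕ →₀ ℕ) → (ℕ →₀ ℕ)) :
    ℕ → (ℕ × List ℕ+ → ℕ) → (ℕ →₀ ℕ)
  | 0, _ => 0
  | D + 1, g => Φ (g (0, [])) (asm Φ D (g ∘ lch)) (asm Φ D (g ∘ rch))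

/-- Admissible functions on the tree. -/
def Adm (n D : ℕ) (g : ℕ × List ℕ+ → ℕ) : Prop :=
  (∀ i, IsTriangular (g i)) ∧ (Function.support g).Finite ∧ (∀ i, D ≤ lev i → g i = 0) ∧ tw g ≤ n

lemma Adm.left {n D g} (h : Adm n (D + 1) g) : Adm n D (g ∘ lch) := by
  obtain ⟨h1, h2, h3, h4⟩ := h
  refine ⟨fun i => h1 _, h2.preimage (lch_inj.injOn), fun i hi => h3 _ ?_, ?_⟩
  · rw [lev_lch]; omega
  · have := tw_rec h2
    omega

lemma Adm.right {n D g} (h : Adm n (D + 1) g) : Adm n D (g ∘ rch) := by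
  obtain ⟨h1, h2, h3, h4⟩ := h
  refine ⟨fun i => h1 _, h2.preimage (rch_inj.injOn), fun i hi => h3 _ ?_, ?_⟩
  · rw [lev_rch]; omega
  · have := tw_rec h2
    omega

section
variable {n : ℕ} {Φ : ℕ → (ℕ →₀ ℕ) → (ℕ →₀ ℕ) → (ℕ →₀ ℕ)}

lemma asm_pw (hΦ : ∀ t l m, IsTriangular t → t + 2 * pw l + 2 * pw m ≤ n →
      pw (Φ t l m) = t + 2 * pw l + 2 * pw m) (D : ℕ) :
    ∀ g, Adm n D g → pw (asm Φ D g) = tw g := by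
  induction D with
  | zero =>
    intro g hg
    have : g = 0 := funext fun i => hg.2.2.1 i (Nat.zero_le _)
    simp [asm, this, pw, tw]
  | succ D ih =>
    intro g hg
    have hr := tw_rec hg.2.1
    have hn := hg.2.2.2
    have e1 := ih _ hg.left
    have e2 := ih _ hg.right
    rw [asm, hΦ _ _ _ (hg.1 _) (by omega), e1, e2, hr]

lemma asm_inj (hΦ : ∀ t l m, IsTriangular t → t + 2 * pw l + 2 * pw m ≤ n →
      pw (Φ t l m) = t + 2 * pw l + 2 * pw m)
    (hΦ2 : ∀ t l m t' l' m', IsTriangular t → t + 2 * pw l + 2 * pw m ≤ n →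
      IsTriangular t' → t' + 2 * pw l' + 2 * pw m' ≤ n →
      Φ t l m = Φ t' l' m' → t = t' ∧ l = l' ∧ m = m') (D : ℕ) :
    ∀ g g', Adm n D g → Adm n D g' → asm Φ D g = asm Φ D g' → g = g' := by
  induction D with
  | zero =>
    intro g g' hg hg' _
    exact funext fun i => (hg.2.2.1 i (Nat.zero_le _)).trans (hg'.2.2.1 i (Nat.zero_le _)).symm
  | succ D ih =>
    intro g g' hg hg' he
    have hr := tw_rec hg.2.1
    have hn := hg.2.2.2
    have e1 := asm_pw hΦ D _ hg.left
    have e2 := asm_pw hΦ D _ hg.right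
    have hr' := tw_rec hg'.2.1
    have hn' := hg'.2.2.2
    have e1' := asm_pw hΦ D _ hg'.left
    have e2' := asm_pw hΦ D _ hg'.right
    obtain ⟨h0, h1, h2⟩ := hΦ2 _ _ _ _ _ _ (hg.1 _) (by omega) (hg'.1 _) (by omega) he
    have h1 := ih _ _ hg.left hg'.left h1
    have h2 := ih _ _ hg.right hg'.right h2
    funext i
    rcases tree_cases i with rfl | ⟨j, rfl⟩ | ⟨j, rfl⟩
    · exact h0
    · exact congrFun h1 j
    · exact congrFun h2 j

end

lemma adm_of {n : ℕ} {g : ℕ × List ℕ+ → ℕ} (h1 : ∀ i, IsTriangular (g i))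
    (h2 : (Function.support g).Finite) (h3 : tw g ≤ n) : Adm n (n + 2) g := by
  refine ⟨h1, h2, ?_, h3⟩
  intro i hi
  by_contra hne
  have hle : 2 ^ lev i * g i ≤ tw g := by
    apply single_le_finsum i (f := fun i => 2 ^ lev i * g i) _ (fun _ => Nat.zero_le _)
    exact h2.subset (fun i hi => by
      simp only [Function.mem_support] at hi ⊢
      intro h
      exact hi (by simp [h]))
  have h4 : lev i < 2 ^ lev i := Nat.lt_two_pow_self
  have : 1 ≤ g i := Nat.one_le_iff_ne_zero.2 hne
  nlinarith

/-- Extension of `f` on sequences to the tree. -/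
def ext0 (f : List ℕ+ → ℕ) (i : ℕ × List ℕ+) : ℕ := if i.1 = 0 then f i.2 else 0

lemma ext0_tri {f : List ℕ+ → ℕ} (h : ∀ c, IsTriangular (f c)) (i) : IsTriangular (ext0 f i) := by
  unfold ext0
  split_ifs
  · exact h _
  · exact ⟨0, rfl⟩

lemma ext0_supp {f : List ℕ+ → ℕ} (h : (Function.support f).Finite) :
    (Function.support (ext0 f)).Finite := by
  refine (h.image (fun c => ((0 : ℕ), c))).subset ?_
  rintro ⟨a, c⟩ hi
  simp only [Function.mem_support, ext0, ne_eq, ite_eq_right_iff, Classical.not_imp] at hi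
  obtain ⟨rfl, hc⟩ := hi
  exact ⟨c, hc, rfl⟩

lemma ext0_tw (f : List ℕ+ → ℕ) : tw (ext0 f) = ∑ᶠ c : List ℕ+, 2 ^ csum c * f c := by
  have hinj : Function.Injective (fun c : List ℕ+ => ((0 : ℕ), c)) := fun a b h => by
    simpa using h
  have h := finsum_mem_range (f := fun i => 2 ^ lev i * ext0 f i) hinj
  have h2 : ∑ᶠ c : List ℕ+, 2 ^ csum c * f c =
      ∑ᶠ c : List ℕ+, 2 ^ lev ((0 : ℕ), c) * ext0 f (0, c) := by
    simp [lev, ext0]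
  rw [h2, ← h, tw]
  symm
  refine ((finsum_mem_inter_support_eq _ _ Set.univ ?_).trans (finsum_mem_univ _))
  ext ⟨a, c⟩
  simp only [Set.mem_inter_iff, Set.mem_range, Function.mem_support, Set.mem_univ, true_and,
    and_iff_right_iff_imp]
  intro hne
  by_cases ha : a = 0
  · subst ha
    exact ⟨c, rfl⟩
  · simp [ext0, ha] at hne

/-- The partition with given multiplicities. -/
noncomputable def toPar (m : ℕ →₀ ℕ) : Σ k : ℕ, Nat.Partition k :=
  ⟨((Finsupp.toMultiset m).map (· + 1)).sum,
    { parts := (Finsupp.toMultiset m).map (· + 1)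
      parts_pos := by
        intro i hi
        obtain ⟨j, _, rfl⟩ := Multiset.mem_map.1 hi
        omega
      parts_sum := rfl }⟩

lemma toPar_fst (m : ℕ →₀ ℕ) : (toPar m).1 = pw m := by
  simp only [toPar, pw]
  rw [Finset.sum_multiset_map_count, Finsupp.toFinset_toMultiset]
  simp only [Finsupp.count_toMultiset, smul_eq_mul, Finsupp.sum]
  exact Finset.sum_congr rfl (fun i _ => mul_comm _ _)

lemma toPar_inj : Function.Injective toPar := by
  intro m m' h
  have h1 : ∀ a b : (Σ k : ℕ, Nat.Partition k), a = b → a.2.parts = b.2.parts := by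
    rintro a _ rfl
    rfl
  have h2 : (Finsupp.toMultiset m).map (· + 1) = (Finsupp.toMultiset m').map (· + 1) := h1 _ _ h
  exact Finsupp.orderIsoMultiset.injective (Multiset.map_injective (add_left_injective 1) h2)

lemma bip_finite (n : ℕ) : { pq : (Σ m : ℕ, Nat.Partition m) × (Σ m : ℕ, Nat.Partition m) |
      pq.1.1 + pq.2.1 = n }.Finite := by
  have h : ({p : (Σ m : ℕ, Nat.Partition m) | p.1 ≤ n}).Finite := by
    have h0 : (Set.univ : Set (Σ m : Fin (n + 1), Nat.Partition m)).Finite := Set.finite_univ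
    refine (h0.image (fun p => (⟨p.1, p.2⟩ : Σ m : ℕ, Nat.Partition m))).subset ?_
    rintro ⟨k, p⟩ hk
    exact ⟨⟨⟨k, Nat.lt_succ_of_le hk⟩, p⟩, trivial, rfl⟩
  refine (h.prod h).subset ?_
  rintro ⟨p, q⟩ hpq
  simp only [Set.mem_ofPred_eq, Set.mem_prod] at hpq ⊢
  omega

/-- For every integer `n ≥ 2`, the number of ordered pairs `(f, f′)`, where `f : 𝒞 → ℕ` and
`f′ : ℕ × 𝒞 → ℕ` are finitely supported functions all of whose values are triangular numbers
and which satisfy `∑ 2^{|𝔠|} * f 𝔠 + ∑ 2^{a + |𝔠|} * f′ (a, 𝔠) = n`, is strictly smaller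
than the number of bipartitions of `n`. -/
theorem weight_count_Sp_bad_prime_lt (n : ℕ) (hn : 2 ≤ n) :
    Set.ncard { ff : (List ℕ+ → ℕ) × (ℕ × List ℕ+ → ℕ) |
      (∀ c, IsTriangular (ff.1 c)) ∧ (∀ i, IsTriangular (ff.2 i)) ∧
      (Function.support ff.1).Finite ∧ (Function.support ff.2).Finite ∧
      (∑ᶠ c : List ℕ+, 2 ^ csum c * ff.1 c) +
        (∑ᶠ i : ℕ × List ℕ+, 2 ^ (i.1 + csum i.2) * ff.2 i) = n } <
    Set.ncard { pq : (Σ m : ℕ, Nat.Partition m) × (Σ m : ℕ, Nat.Partition m) |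
      pq.1.1 + pq.2.1 = n } := by
  classical
  obtain ⟨Φ, hΦ, hΦ2⟩ := core n
  set S := { ff : (List ℕ+ → ℕ) × (ℕ × List ℕ+ → ℕ) |
      (∀ c, IsTriangular (ff.1 c)) ∧ (∀ i, IsTriangular (ff.2 i)) ∧
      (Function.support ff.1).Finite ∧ (Function.support ff.2).Finite ∧
      (∑ᶠ c : List ℕ+, 2 ^ csum c * ff.1 c) +
        (∑ᶠ i : ℕ × List ℕ+, 2 ^ (i.1 + csum i.2) * ff.2 i) = n } with hS
  set F : (List ℕ+ → ℕ) × (ℕ × List ℕ+ → ℕ) →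
      (Σ m : ℕ, Nat.Partition m) × (Σ m : ℕ, Nat.Partition m) :=
    fun ff => (toPar (asm Φ (n + 2) (ext0 ff.1)), toPar (asm Φ (n + 2) ff.2)) with hF
  have hw : ∀ ff ∈ S, tw (ext0 ff.1) + tw ff.2 = n := by
    intro ff hff
    rw [ext0_tw]
    exact hff.2.2.2.2
  have hA1 : ∀ ff ∈ S, Adm n (n + 2) (ext0 ff.1) := fun ff hff =>
    adm_of (ext0_tri hff.1) (ext0_supp hff.2.2.1) (by have := hw ff hff; omega)
  have hA2 : ∀ ff ∈ S, Adm n (n + 2) ff.2 := fun ff hff =>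
    adm_of hff.2.1 hff.2.2.2.1 (by have := hw ff hff; omega)
  have hinj : Set.InjOn F S := by
    intro ff hff gg hgg he
    simp only [hF, Prod.mk.injEq] at he
    have e1 := asm_inj hΦ hΦ2 _ _ _ (hA1 ff hff) (hA1 gg hgg) (toPar_inj he.1)
    have e2 := asm_inj hΦ hΦ2 _ _ _ (hA2 ff hff) (hA2 gg hgg) (toPar_inj he.2)
    refine Prod.ext (funext fun c => ?_) e2
    simpa [ext0] using congrFun e1 (0, c)
  rw [← Set.ncard_image_of_injOn hinj]
  refine Set.ncard_lt_ncard ?_ (bip_finite n)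
  rw [Set.ssubset_iff_of_subset]
  · have t0 : IsTriangular 0 := ⟨0, rfl⟩
    have t1 : IsTriangular 1 := ⟨1, rfl⟩
    have p0 : pw 0 = 0 := by simp [pw]
    have q1 : pw (Φ 1 0 0) = 1 := by rw [hΦ _ _ _ t1 (by omega), p0]
    have q2 : pw (Φ 0 (Φ 1 0 0) 0) = 2 := by rw [hΦ _ _ _ t0 (by omega), p0, q1]
    have q3 : pw (Finsupp.single 0 (n - 2)) = n - 2 := by
      rw [pw, Finsupp.sum_single_index (by simp)]
      simp
    refine ⟨(toPar (Φ 0 (Φ 1 0 0) 0), toPar (Finsupp.single 0 (n - 2))), ?_, ?_⟩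
    · simp only [Set.mem_ofPred_eq, toPar_fst, q2, q3]
      omega
    · rintro ⟨ff, hff, he⟩
      simp only [hF, Prod.mk.injEq] at he
      have h := toPar_inj he.1
      have a0 := hA1 ff hff
      have r0 := tw_rec a0.2.1
      have r1 := tw_rec a0.left.2.1
      have n0 := a0.2.2.2
      have n1 := a0.left.2.2.2
      have w1 := asm_pw hΦ _ _ a0.left
      have w2 := asm_pw hΦ _ _ a0.right
      have w3 := asm_pw hΦ _ _ a0.left.left
      have w4 := asm_pw hΦ _ _ a0.left.right
      have h' := (hΦ2 _ _ _ _ _ _ (a0.1 _) (by omega) t0 (by omega) h).2.1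
      have h'' := (hΦ2 _ _ _ _ _ _ (a0.left.1 _) (by omega) t1 (by omega) h').1
      simp [ext0, lch] at h''
  · rintro _ ⟨ff, hff, rfl⟩
    have := hw ff hff
    simp only [hF, Set.mem_ofPred_eq, toPar_fst]
    rw [asm_pw hΦ _ _ (hA1 ff hff), asm_pw hΦ _ _ (hA2 ff hff), this]
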